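/- The sum of f^λ over all partitions λ of n, where f^λ is the number of standard Young tableaux of shape λ, equals the number of involutions in S_n. -/

import Mathlib

/-- The cells of the Young diagram of a partition given as a list `l` of row lengths:
row `i` (0-indexed) has cells `(i, j)` for `j < l_i`. -/
def cells (l : List ℕ) : Set (ℕ × ℕ) := {c | c.2 < l.getD c.1 0}

/-- Rows of `T` increase left to right on the diagram of `l`. -/
def RowInc (l : List ℕ) (T : ℕ × ℕ → ℕ) : Prop :=
  ∀ i j j', (i, j) ∈ cells l → (i, j') ∈ cells l → j < j' → T (i, j) < T (i, j')

/-- Columns of `T` increase top to bottom on the diagram of `l`. -/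
def ColInc (l : List ℕ) (T : ℕ × ℕ → ℕ) : Prop :=
  ∀ i i' j, (i, j) ∈ cells l → (i', j) ∈ cells l → i < i' → T (i, j) < T (i', j)

/-- `T` is a standard Young tableau of shape `l`: a bijective filling of the diagram by
`1, …, |l|`, increasing along rows and columns (and `0` off the diagram, to normalize). -/
def IsSYT (l : List ℕ) (T : ℕ × ℕ → ℕ) : Prop :=
  Set.BijOn T (cells l) (Set.Icc 1 l.sum) ∧ (∀ c, c ∉ cells l → T c = 0) ∧
    RowInc l T ∧ ColInc l T

/-- `f^λ`, the number of standard Young tableaux of shape `l`. -/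
noncomputable def fSYT (l : List ℕ) : ℕ := Set.ncard {T | IsSYT l T}

/-!
Young's lattice is `1`-differential in Stanley's sense: any two distinct diagrams have as many
common upper covers as common lower covers, and every diagram has one more upper cover than it has
lower covers. So its up and down operators satisfy `D * U = U * D + 1`, whence
`D (U ^ (n + 1) ⊥) = (n + 1) U ^ n ⊥`, and the total coefficient of `U v` is that of `D v` plus
that of `v`. The total coefficient `a n` of `U ^ n ⊥` therefore satisfies
`a (n + 2) = a (n + 1) + (n + 1) * a n`.

The coefficient of `μ` in `U ^ n ⊥` is the number of standard tableaux of shape `μ`, because the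
largest entry of a tableau can be stripped off. Involutions satisfy the same recursion, according to
whether a chosen point is fixed or exchanged with one of the others.
-/

open Finset

/-- A poset in which every element has finitely many lower covers and finitely many upper covers,
given as explicit finsets. -/
class FiniteCovers (P : Type*) [PartialOrder P] where
  lowerCovers : P → Finset P
  upperCovers : P → Finset P
  mem_lowerCovers {x y : P} : y ∈ lowerCovers x ↔ y ⋖ x
  mem_upperCovers {x y : P} : y ∈ upperCovers x ↔ x ⋖ y

open FiniteCovers

/-- Stanley's `r`-differential condition. Neither a grading nor a least element is part of the
definition here. -/
structure IsDifferential (r : ℕ) (P : Type*) [PartialOrder P] [FiniteCovers P] : Prop where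
  card_inter_upperCovers : ∀ [DecidableEq P] {x y : P}, x ≠ y →
    #(upperCovers x ∩ upperCovers y) = #(lowerCovers x ∩ lowerCovers y)
  card_upperCovers : ∀ x : P, #(upperCovers x) = #(lowerCovers x) + r

/-- The only candidates for a common lower and a common upper cover of `x ≠ y` are `x ⊓ y` and
`x ⊔ y`, and by modularity one is such a cover exactly when the other is. -/
theorem card_inter_upperCovers_eq_card_inter_lowerCovers {P : Type*} [Lattice P]
    [IsModularLattice P] [FiniteCovers P] [DecidableEq P] {x y : P} (hxy : x ≠ y) :
    #(upperCovers x ∩ upperCovers y) = #(lowerCovers x ∩ lowerCovers y) := by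
  refine card_nbij' (fun _ ↦ x ⊓ y) (fun _ ↦ x ⊔ y) ?_ ?_ ?_ ?_ <;> intro z hz <;>
    simp only [coe_inter, Set.mem_inter_iff, mem_coe, mem_upperCovers, mem_lowerCovers] at hz ⊢ <;>
    obtain ⟨hzx, hzy⟩ := hz
  · obtain rfl : x ⊔ y = z := hzx.wcovBy.sup_eq hzy.wcovBy hxy
    exact ⟨inf_covBy_of_covBy_sup_right hzy, inf_covBy_of_covBy_sup_left hzx⟩
  · obtain rfl : x ⊓ y = z := hzx.wcovBy.inf_eq hzy.wcovBy hxy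
    exact ⟨covBy_sup_of_inf_covBy_right hzy, covBy_sup_of_inf_covBy_left hzx⟩
  · exact hzx.wcovBy.sup_eq hzy.wcovBy hxy
  · exact hzx.wcovBy.inf_eq hzy.wcovBy hxy

theorem mul_pow_succ_of_mul_eq_mul_add {R : Type*} [Semiring R] {d u r : R} (hru : Commute r u)
    (h : d * u = u * d + r) (n : ℕ) :
    d * u ^ (n + 1) = u ^ (n + 1) * d + (n + 1) • (r * u ^ n) := by
  induction n with
  | zero => simpa using h
  | succ n ih =>
    calc d * u ^ (n + 1 + 1)
        = u * (d * u ^ (n + 1)) + r * u ^ (n + 1) := by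
          rw [pow_succ' u (n + 1), ← mul_assoc, h, add_mul, mul_assoc]
      _ = u ^ (n + 1 + 1) * d + (n + 1) • (u * r * u ^ n) + r * u ^ (n + 1) := by
          rw [ih, mul_add, mul_smul_comm, ← mul_assoc, ← mul_assoc, ← pow_succ']
      _ = u ^ (n + 1 + 1) * d + (n + 1 + 1) • (r * u ^ (n + 1)) := by
          rw [← hru.eq, mul_assoc r, ← pow_succ', succ_nsmul _ (n + 1), add_assoc]

namespace FiniteCovers

section Operators

variable (P : Type*) [PartialOrder P] [FiniteCovers P]

/-- Stanley's up operator on formal combinations of elements of `P`: it sends `x` to the sum of the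
elements covering `x`. -/
noncomputable def up : Module.End ℕ (P →₀ ℕ) :=
  Finsupp.linearCombination ℕ fun x ↦ ∑ y ∈ upperCovers x, Finsupp.single y 1

/-- Stanley's down operator on formal combinations of elements of `P`: it sends `x` to the sum of
the elements covered by `x`. -/
noncomputable def down : Module.End ℕ (P →₀ ℕ) :=
  Finsupp.linearCombination ℕ fun x ↦ ∑ y ∈ lowerCovers x, Finsupp.single y 1

variable {P}

theorem up_single (x : P) :
    up P (Finsupp.single x 1) = ∑ y ∈ upperCovers x, Finsupp.single y 1 := by
  simp [up]

theorem down_single (x : P) :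
    down P (Finsupp.single x 1) = ∑ y ∈ lowerCovers x, Finsupp.single y 1 := by
  simp [down]

theorem up_apply (v : P →₀ ℕ) (y : P) : up P v y = ∑ x ∈ lowerCovers y, v x := by
  classical
  induction v using Finsupp.induction_linear with
  | zero => simp
  | add v w hv hw => simp [hv, hw, sum_add_distrib]
  | single x a =>
    simp [up, Finsupp.single_apply, mem_upperCovers, mem_lowerCovers]

theorem down_apply (v : P →₀ ℕ) (y : P) : down P v y = ∑ x ∈ upperCovers y, v x := by
  classical
  induction v using Finsupp.induction_linear with
  | zero => simp
  | add v w hv hw => simp [hv, hw, sum_add_distrib]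
  | single x a =>
    simp [down, Finsupp.single_apply, mem_upperCovers, mem_lowerCovers]

theorem down_up_single_apply [DecidableEq P] (x y : P) :
    down P (up P (Finsupp.single x 1)) y = #(upperCovers x ∩ upperCovers y) := by
  rw [inter_comm, ← filter_mem_eq_inter, card_filter, down_apply]
  refine sum_congr rfl fun z _ ↦ ?_
  simp only [up_apply, Finsupp.single_apply, sum_ite_eq]
  exact if_congr (mem_lowerCovers.trans mem_upperCovers.symm) rfl rfl

theorem up_down_single_apply [DecidableEq P] (x y : P) :
    up P (down P (Finsupp.single x 1)) y = #(lowerCovers x ∩ lowerCovers y) := by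
  rw [inter_comm, ← filter_mem_eq_inter, card_filter, up_apply]
  refine sum_congr rfl fun z _ ↦ ?_
  simp only [down_apply, Finsupp.single_apply, sum_ite_eq]
  exact if_congr (mem_upperCovers.trans mem_lowerCovers.symm) rfl rfl

theorem down_single_bot [OrderBot P] : down P (Finsupp.single ⊥ 1) = 0 := by
  have : lowerCovers (⊥ : P) = ∅ :=
    eq_empty_of_forall_notMem fun x hx ↦ not_lt_bot (mem_lowerCovers.1 hx).lt
  rw [down_single, this, sum_empty]

theorem degree_up_single (x : P) : (up P (Finsupp.single x 1)).degree = #(upperCovers x) := by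
  simp [up_single]

theorem degree_down_single (x : P) : (down P (Finsupp.single x 1)).degree = #(lowerCovers x) := by
  simp [down_single]

end Operators

end FiniteCovers

namespace IsDifferential

variable {r : ℕ} {P : Type*} [PartialOrder P] [FiniteCovers P]

theorem down_mul_up (h : IsDifferential r P) :
    down P * up P = up P * down P + (r : Module.End ℕ (P →₀ ℕ)) := by
  classical
  refine Finsupp.lhom_ext' fun x ↦ LinearMap.ext_ring <| Finsupp.ext fun y ↦ ?_
  obtain rfl | hxy := eq_or_ne x y
  · simp [down_up_single_apply, up_down_single_apply, h.card_upperCovers]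
  · simp [down_up_single_apply, up_down_single_apply, h.card_inter_upperCovers hxy, hxy]

theorem degree_up (h : IsDifferential r P) (v : P →₀ ℕ) :
    (up P v).degree = (down P v).degree + r * v.degree := by
  induction v using Finsupp.induction_linear with
  | zero => simp
  | add v w hv hw => simp only [map_add, hv, hw]; ring
  | single x a =>
    rw [← mul_one a, ← smul_eq_mul, ← Finsupp.smul_single]
    simp only [map_smul, map_nsmul, degree_up_single, degree_down_single, h.card_upperCovers,
      Finsupp.degree_single, smul_eq_mul]
    ring

variable [OrderBot P]

theorem down_up_pow_succ_bot (h : IsDifferential r P) (n : ℕ) :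
    down P ((up P ^ (n + 1)) (Finsupp.single ⊥ 1)) =
      (r * (n + 1)) • (up P ^ n) (Finsupp.single ⊥ 1) := by
  have := mul_pow_succ_of_mul_eq_mul_add (Nat.cast_commute r (up P)) h.down_mul_up n
  simpa [down_single_bot, mul_smul, add_smul] using LinearMap.congr_fun this (Finsupp.single ⊥ 1)

theorem degree_up_pow_add_two_bot (h : IsDifferential r P) (n : ℕ) :
    ((up P ^ (n + 2)) (Finsupp.single ⊥ 1)).degree =
      r * ((up P ^ (n + 1)) (Finsupp.single ⊥ 1)).degree +
        r * (n + 1) * ((up P ^ n) (Finsupp.single ⊥ 1)).degree := by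
  rw [pow_succ' (up P) (n + 1), Module.End.mul_apply, h.degree_up, h.down_up_pow_succ_bot,
    map_nsmul, smul_eq_mul, add_comm]

theorem degree_up_bot (h : IsDifferential r P) : (up P (Finsupp.single ⊥ 1)).degree = r := by
  rw [h.degree_up, down_single_bot]
  simp

end IsDifferential

section StandardFillings

variable {α : Type*} [PartialOrder α] {s : Finset α} {T : α → ℕ} {a : α}

/-- The standard fillings of a finite subset `s` of a poset: the order-preserving bijections from
`s` to `{1, …, #s}`, extended by `0` off `s`. When `s` is the set of cells of a Young diagram these
are its standard Young tableaux. -/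
def standardFillings (s : Finset α) : Set (α → ℕ) :=
  {T | Set.BijOn T s (Set.Icc 1 #s) ∧ (∀ a ∉ s, T a = 0) ∧ StrictMonoOn T s}

theorem le_card_of_mem_standardFillings (hT : T ∈ standardFillings s) (a : α) : T a ≤ #s := by
  by_cases ha : a ∈ s
  · exact (hT.1.mapsTo ha).2
  · simp [hT.2.1 a ha]

theorem finite_standardFillings (s : Finset α) : (standardFillings s).Finite := by
  refine Set.Finite.of_finite_image (f := s.restrict)
    ((Set.Finite.pi' fun _ ↦ Set.finite_Iic #s).subset ?_) fun T hT T' hT' h ↦ funext fun a ↦ ?_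
  · rintro _ ⟨T, hT, rfl⟩ a
    exact le_card_of_mem_standardFillings hT a
  · by_cases ha : a ∈ s
    · exact congrFun h ⟨a, ha⟩
    · rw [hT.2.1 a ha, hT'.2.1 a ha]

theorem standardFillings_empty : standardFillings (∅ : Finset α) = {0} := by
  ext T
  simp +contextual [standardFillings, funext_iff, StrictMonoOn]

theorem exists_maximal_of_mem_standardFillings (hs : s.Nonempty) (hT : T ∈ standardFillings s) :
    ∃ a, Maximal (· ∈ s) a ∧ T a = #s := by
  obtain ⟨a, ha, hTa⟩ := hT.1.surjOn ⟨hs.card_pos, le_rfl⟩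
  refine ⟨a, maximal_iff_forall_gt.2 ⟨ha, fun b hab hb ↦ ?_⟩, hTa⟩
  exact (hTa ▸ hT.2.2 ha hb hab).not_ge (le_card_of_mem_standardFillings hT b)

variable [DecidableEq α]

theorem update_zero_mem_standardFillings_erase (hT : T ∈ standardFillings s) (ha : a ∈ s)
    (hTa : T a = #s) : Function.update T a 0 ∈ standardFillings (s.erase a) := by
  have heq : Set.EqOn T (Function.update T a 0) (s.erase a) := fun b hb ↦
    (Function.update_of_ne (ne_of_mem_erase hb) _ _).symm
  refine ⟨?_, fun b hb ↦ ?_, ?_⟩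
  · have hIcc : Set.Icc 1 #(s.erase a) = Set.Icc 1 #s \ {T a} := by
      have := card_erase_add_one ha
      ext k
      simp only [hTa, Set.mem_Icc, Set.mem_sdiff, Set.mem_singleton_iff]
      lia
    rw [hIcc]
    refine Set.BijOn.congr ?_ heq
    rw [coe_erase]
    exact hT.1.sdiff_singleton ha
  · obtain rfl | hba := eq_or_ne b a
    · simp
    · rw [Function.update_of_ne hba]
      exact hT.2.1 b fun hbs ↦ hb (mem_erase.2 ⟨hba, hbs⟩)
  · exact (hT.2.2.mono (erase_subset a s)).congr heq

theorem update_card_mem_standardFillings (ha : Maximal (· ∈ s) a)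
    (hT : T ∈ standardFillings (s.erase a)) : Function.update T a #s ∈ standardFillings s := by
  have hcard := card_erase_add_one ha.prop
  have heq : Set.EqOn T (Function.update T a #s) (s.erase a) := fun b hb ↦
    (Function.update_of_ne (ne_of_mem_erase hb) _ _).symm
  refine ⟨?_, fun b hb ↦ ?_, fun b hb c hc hbc ↦ ?_⟩
  · have hIcc : Set.Icc 1 #s = insert (Function.update T a #s a) (Set.Icc 1 #(s.erase a)) := by
      ext k
      simp only [Function.update_self, Set.mem_Icc, Set.mem_insert_iff]
      lia
    rw [hIcc, ← insert_erase ha.prop, coe_insert, insert_erase ha.prop]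
    refine (hT.1.congr heq).insert ?_
    simp only [Function.update_self, Set.mem_Icc]
    lia
  · rw [Function.update_of_ne (ne_of_mem_of_not_mem ha.prop hb).symm]
    exact hT.2.1 b fun h ↦ hb (mem_of_mem_erase h)
  · have hba : b ≠ a := by
      rintro rfl
      exact ha.not_prop_of_gt hbc hc
    rw [Function.update_of_ne hba]
    obtain rfl | hca := eq_or_ne c a
    · rw [Function.update_self]
      have := le_card_of_mem_standardFillings hT b
      lia
    · rw [Function.update_of_ne hca]
      exact hT.2.2 (mem_erase.2 ⟨hba, hb⟩) (mem_erase.2 ⟨hca, hc⟩) hbc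

open Classical in
/-- The largest entry of a standard filling sits at a maximal element; remove it. -/
theorem ncard_standardFillings (hs : s.Nonempty) :
    (standardFillings s).ncard =
      ∑ a ∈ s with Maximal (· ∈ s) a, (standardFillings (s.erase a)).ncard := by
  simp only [Set.ncard_eq_toFinset_card _ (finite_standardFillings _)]
  rw [← card_sigma]
  symm
  refine card_bij (fun x _ ↦ Function.update x.2 x.1 #s) ?_ ?_ ?_
  · rintro ⟨a, T⟩ hx
    simp only [mem_sigma, mem_filter, Set.Finite.mem_toFinset] at hx ⊢
    exact update_card_mem_standardFillings hx.1.2 hx.2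
  · rintro ⟨a, T⟩ hx ⟨a', T'⟩ hx' h
    simp only [mem_sigma, mem_filter, Set.Finite.mem_toFinset] at hx hx' h
    obtain rfl : a = a' := by
      by_contra hne
      have hlt := card_erase_lt_of_mem hx'.1.1
      have := congrFun h a
      rw [Function.update_self, Function.update_of_ne hne] at this
      exact hlt.not_ge (this ▸ le_card_of_mem_standardFillings hx'.2 a)
    congr 1
    rw [← Function.update_eq_self a T, ← Function.update_eq_self a T',
      hx.2.2.1 a (notMem_erase a s), hx'.2.2.1 a (notMem_erase a s),
      ← Function.update_idem (#s) 0 T, h, Function.update_idem]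
  · intro T hT
    rw [Set.Finite.mem_toFinset] at hT
    obtain ⟨a, ha, hTa⟩ := exists_maximal_of_mem_standardFillings hs hT
    refine ⟨⟨a, Function.update T a 0⟩, ?_, ?_⟩
    · simp only [mem_sigma, mem_filter, Set.Finite.mem_toFinset]
      exact ⟨⟨ha.prop, ha⟩, update_zero_mem_standardFillings_erase hT ha.prop hTa⟩
    · rw [Function.update_idem, ← hTa, Function.update_eq_self]

end StandardFillings

section YoungLattice

variable {μ ν : YoungDiagram} {c : ℕ × ℕ}

theorem exists_mem_minimal_notMem_of_lt (h : μ < ν) : ∃ c ∈ ν, Minimal (· ∉ μ) c := by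
  obtain ⟨d, hdν, hdμ⟩ := exists_of_ssubset (YoungDiagram.cells_ssubset_iff.2 h)
  obtain ⟨c, hcd, hc⟩ := exists_minimal_le_of_wellFoundedLT (· ∉ μ) d hdμ
  exact ⟨c, ν.isLowerSet hcd hdν, hc⟩

/-- The Young diagram obtained by adding the minimal non-cell `c` to `μ`. -/
def insertCell (μ : YoungDiagram) {c : ℕ × ℕ} (hc : Minimal (· ∉ μ) c) : YoungDiagram where
  cells := insert c μ.cells
  isLowerSet a b hba ha := by
    simp only [coe_insert, Set.mem_insert_iff, mem_coe] at ha ⊢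
    obtain rfl | ha := ha
    · by_cases hb : b ∈ μ
      · exact .inr hb
      · exact .inl (hba.antisymm (hc.le_of_le hb hba))
    · exact .inr (μ.isLowerSet hba ha)

/-- The Young diagram obtained by removing the maximal cell `c` from `μ`. -/
def eraseCell (μ : YoungDiagram) {c : ℕ × ℕ} (hc : Maximal (· ∈ μ) c) : YoungDiagram where
  cells := μ.cells.erase c
  isLowerSet a b hba ha := by
    simp only [coe_erase, Set.mem_sdiff, Set.mem_singleton_iff, mem_coe] at ha ⊢
    refine ⟨μ.isLowerSet hba ha.1, ?_⟩
    rintro rfl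
    exact ha.2 ((hc.le_of_ge ha.1 hba).antisymm hba)

theorem cells_covBy_cells : μ.cells ⋖ ν.cells ↔ μ ⋖ ν := by
  refine ⟨fun h ↦ ⟨h.lt, fun ξ hμ hν ↦ h.2 hμ hν⟩, fun h ↦ ?_⟩
  obtain ⟨c, hcν, hc⟩ := exists_mem_minimal_notMem_of_lt h.lt
  have hle : insertCell μ hc ≤ ν := insert_subset hcν h.le
  have hlt : μ < insertCell μ hc := ssubset_insert hc.prop
  rw [← (h.eq_or_eq hlt.le hle).resolve_left hlt.ne']
  exact covBy_insert hc.prop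

theorem covBy_iff_exists_eraseCell :
    ν ⋖ μ ↔ ∃ c, ∃ hc : Maximal (· ∈ μ) c, eraseCell μ hc = ν := by
  rw [← cells_covBy_cells, covBy_iff_exists_erase]
  constructor
  · rintro ⟨c, hcμ, h⟩
    refine ⟨c, ⟨hcμ, fun d hd hcd ↦ ?_⟩, YoungDiagram.ext h⟩
    by_contra hdc
    have hdν : d ∈ ν.cells := h ▸ mem_erase.2 ⟨fun hd ↦ hdc hd.le, hd⟩
    exact notMem_erase c μ.cells (h ▸ ν.isLowerSet hcd hdν)
  · rintro ⟨c, hc, rfl⟩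
    exact ⟨c, hc.prop, rfl⟩

theorem covBy_iff_exists_insertCell :
    μ ⋖ ν ↔ ∃ c, ∃ hc : Minimal (· ∉ μ) c, insertCell μ hc = ν := by
  rw [← cells_covBy_cells, covBy_iff_exists_insert]
  constructor
  · rintro ⟨c, hcμ, h⟩
    refine ⟨c, ⟨hcμ, fun d hd hdc ↦ ?_⟩, YoungDiagram.ext h⟩
    have hdν : d ∈ ν.cells := ν.isLowerSet hdc (mem_coe.2 (h ▸ mem_insert_self c μ.cells))
    rw [← h] at hdν
    exact ((mem_insert.1 hdν).resolve_right hd).ge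
  · rintro ⟨c, hc, rfl⟩
    exact ⟨c, hc.prop, rfl⟩

theorem maximal_mem_cell_iff {i j : ℕ} :
    Maximal (· ∈ μ) (i, j) ↔ j + 1 = μ.rowLen i ∧ μ.rowLen (i + 1) < μ.rowLen i := by
  simp only [maximal_iff_forall_gt, YoungDiagram.mem_iff_lt_rowLen, Prod.forall]
  constructor
  · rintro ⟨hj, h⟩
    have hright := h i (j + 1) (Prod.mk_lt_mk_iff_right.2 j.lt_succ_self)
    have hbelow := h (i + 1) j (Prod.mk_lt_mk_iff_left.2 i.lt_succ_self)
    lia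
  · rintro ⟨hj, hlt⟩
    refine ⟨by lia, fun i' j' h ↦ ?_⟩
    obtain ⟨hi, hj'⟩ | ⟨hi, hj'⟩ := Prod.mk_lt_mk.1 h
    · have := μ.rowLen_anti (i + 1) i' hi
      lia
    · have := μ.rowLen_anti i i' hi
      lia

theorem minimal_notMem_cell_iff {i j : ℕ} :
    Minimal (· ∉ μ) (i, j) ↔ j = μ.rowLen i ∧ (i = 0 ∨ μ.rowLen i < μ.rowLen (i - 1)) := by
  simp only [minimal_iff_forall_lt, YoungDiagram.mem_iff_lt_rowLen, Prod.forall, not_not]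
  constructor
  · rintro ⟨hj, h⟩
    have hleft := h i (j - 1)
    have habove := h (i - 1) j
    simp only [Prod.mk_lt_mk_iff_right, Prod.mk_lt_mk_iff_left] at hleft habove
    lia
  · rintro ⟨hj, hlt⟩
    refine ⟨by lia, fun i' j' h ↦ ?_⟩
    obtain ⟨hi, hj'⟩ | ⟨hi, hj'⟩ := Prod.mk_lt_mk.1 h
    · have := μ.rowLen_anti i' (i - 1) (by lia)
      lia
    · have := μ.rowLen_anti i' i hi
      lia

open Classical in
/-- The inner corners of `μ`: the cells whose removal leaves a Young diagram. -/
noncomputable def innerCorners (μ : YoungDiagram) : Finset (ℕ × ℕ) :=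
  {c ∈ μ.cells | Maximal (· ∈ μ) c}

theorem mem_innerCorners : c ∈ innerCorners μ ↔ Maximal (· ∈ μ) c := by
  simpa [innerCorners] using Maximal.prop

/-- The outer corners of `μ`: the positions where a cell can be added. Apart from the one in row
`0`, they lie in the rows just below the inner corners. -/
noncomputable def outerCorners (μ : YoungDiagram) : Finset (ℕ × ℕ) :=
  insert (0, μ.rowLen 0) ((innerCorners μ).image fun c ↦ (c.1 + 1, μ.rowLen (c.1 + 1)))

theorem mem_outerCorners : c ∈ outerCorners μ ↔ Minimal (· ∉ μ) c := by
  obtain ⟨_ | i, j⟩ := c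
  · simp [outerCorners, minimal_notMem_cell_iff]
  · simp only [outerCorners, mem_insert, mem_image, mem_innerCorners, minimal_notMem_cell_iff,
      Prod.exists, maximal_mem_cell_iff, Prod.mk.injEq, Nat.add_right_cancel_iff]
    constructor
    · rintro (⟨h, -⟩ | ⟨_, _, ⟨-, hlt⟩, rfl, rfl⟩)
      · lia
      · exact ⟨rfl, .inr hlt⟩
    · rintro ⟨rfl, hlt⟩
      exact .inr ⟨i, μ.rowLen i - 1, by grind, rfl, rfl⟩

theorem card_outerCorners (μ : YoungDiagram) : #(outerCorners μ) = #(innerCorners μ) + 1 := by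
  rw [outerCorners, card_insert_of_notMem (by simp), card_image_of_injOn]
  rintro ⟨i, j⟩ hc ⟨i', j'⟩ hc' h
  simp only [mem_coe, mem_innerCorners, maximal_mem_cell_iff, Prod.mk.injEq] at hc hc' h ⊢
  grind

noncomputable instance : FiniteCovers YoungDiagram where
  lowerCovers μ := (innerCorners μ).attach.map
    ⟨fun c ↦ eraseCell μ (mem_innerCorners.1 c.2), fun c d h ↦ Subtype.ext <|
      μ.cells.erase_injOn (mem_innerCorners.1 c.2).prop (mem_innerCorners.1 d.2).prop
        (congrArg YoungDiagram.cells h)⟩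
  upperCovers μ := (outerCorners μ).attach.map
    ⟨fun c ↦ insertCell μ (mem_outerCorners.1 c.2), fun c d h ↦ Subtype.ext <|
      (insert_inj (mem_outerCorners.1 c.2).prop).1 (congrArg YoungDiagram.cells h)⟩
  mem_lowerCovers := by
    simp only [mem_map, mem_attach, true_and, Subtype.exists, mem_innerCorners,
      covBy_iff_exists_eraseCell]
    exact Iff.rfl
  mem_upperCovers := by
    simp only [mem_map, mem_attach, true_and, Subtype.exists, mem_outerCorners,
      covBy_iff_exists_insertCell]
    exact Iff.rfl

theorem isDifferential_youngDiagram : IsDifferential 1 YoungDiagram where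
  card_inter_upperCovers := card_inter_upperCovers_eq_card_inter_lowerCovers
  card_upperCovers μ := by simp [upperCovers, lowerCovers, card_outerCorners]

theorem sum_lowerCovers_cells {M : Type*} [AddCommMonoid M] (μ : YoungDiagram)
    (F : Finset (ℕ × ℕ) → M) :
    ∑ ν ∈ lowerCovers μ, F ν.cells = ∑ c ∈ innerCorners μ, F (μ.cells.erase c) := by
  rw [← sum_attach (innerCorners μ)]
  exact sum_map ..

theorem up_pow_bot_apply (n : ℕ) (μ : YoungDiagram) :
    (up YoungDiagram ^ n) (Finsupp.single ⊥ 1) μ =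
      if #μ.cells = n then (standardFillings μ.cells).ncard else 0 := by
  induction n generalizing μ with
  | zero =>
    obtain rfl | hμ := eq_or_ne μ ⊥
    · simp [standardFillings_empty]
    · have hcells : #μ.cells ≠ 0 := fun h ↦ hμ (YoungDiagram.ext (card_eq_zero.1 h))
      simp [hcells, hμ.symm]
  | succ n ih =>
    have hcard : ∀ ν ∈ lowerCovers μ, (#ν.cells = n ↔ #μ.cells = n + 1) := fun ν hν ↦ by
      rw [← (Nat.covBy_iff_add_one_eq.1 (cells_covBy_cells.2 (mem_lowerCovers.1 hν)).card_finset)]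
      lia
    rw [pow_succ', Module.End.mul_apply, up_apply,
      sum_congr rfl fun ν hν ↦ (ih ν).trans (if_congr (hcard ν hν) rfl rfl)]
    split_ifs with h
    · rw [ncard_standardFillings (card_pos.1 (by lia))]
      exact sum_lowerCovers_cells μ fun s ↦ (standardFillings s).ncard
    · exact sum_const_zero

end YoungLattice

section Partitions

variable {l : List ℕ} {n : ℕ}

theorem cells_eq_coe_cells_ofRowLens (hl : l.SortedGE) :
    cells l = (YoungDiagram.ofRowLens l hl).cells := by
  ext ⟨i, j⟩
  simp only [cells, Set.mem_ofPred_eq, mem_coe, YoungDiagram.mem_cells, YoungDiagram.mem_ofRowLens]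
  obtain hi | hi := lt_or_ge i l.length
  · simp [hi]
  · simp [hi.not_gt]

theorem card_cells_ofRowLens (hl : l.SortedGE) : #(YoungDiagram.ofRowLens l hl).cells = l.sum := by
  change #(YoungDiagram.cellsOfRowLens l) = l.sum
  clear hl
  induction l with
  | nil => rfl
  | cons w l ih =>
    rw [YoungDiagram.cellsOfRowLens, card_union_of_disjoint, card_map, ih, List.sum_cons]
    · simp
    · simp +contextual [disjoint_left]

theorem card_cells_eq_sum_rowLens (μ : YoungDiagram) : #μ.cells = μ.rowLens.sum := by
  rw [← card_cells_ofRowLens μ.rowLens_sorted, YoungDiagram.ofRowLens_to_rowLens_eq_self]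

theorem strictMonoOn_cells_iff {β : Type*} [Preorder β] (μ : YoungDiagram) (T : ℕ × ℕ → β) :
    StrictMonoOn T μ.cells ↔
      (∀ i j j', (i, j) ∈ μ.cells → (i, j') ∈ μ.cells → j < j' → T (i, j) < T (i, j')) ∧
      ∀ i i' j, (i, j) ∈ μ.cells → (i', j) ∈ μ.cells → i < i' → T (i, j) < T (i', j) := by
  constructor
  · refine fun h ↦ ⟨fun i j j' hj hj' hlt ↦ ?_, fun i i' j hi hi' hlt ↦ ?_⟩
    · exact h hj hj' (Prod.mk_lt_mk_iff_right.2 hlt)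
    · exact h hi hi' (Prod.mk_lt_mk_iff_left.2 hlt)
  · rintro ⟨hrow, hcol⟩ ⟨i, j⟩ hij ⟨i', j'⟩ hij' hlt
    have hle := Prod.mk_le_mk.1 hlt.le
    have hcorner : (i, j') ∈ μ.cells := μ.up_left_mem hle.1 le_rfl hij'
    obtain rfl | hj := hle.2.eq_or_lt
    · exact hcol i i' j hij hij' (Prod.mk_lt_mk_iff_left.1 hlt)
    · obtain rfl | hi := hle.1.eq_or_lt
      · exact hrow i j j' hij hij' hj
      · exact (hrow i j j' hij hcorner hj).trans (hcol i i' j' hcorner hij' hi)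

theorem fSYT_eq_ncard_standardFillings (hl : l.SortedGE) :
    fSYT l = (standardFillings (YoungDiagram.ofRowLens l hl).cells).ncard := by
  simp only [fSYT, IsSYT, RowInc, ColInc, standardFillings, strictMonoOn_cells_iff,
    cells_eq_coe_cells_ofRowLens hl, card_cells_ofRowLens hl, mem_coe]

/-- The parts of a partition in weakly decreasing order. -/
def sortedParts (p : n.Partition) : List ℕ :=
  (p.parts.sort (· ≤ ·)).reverse

theorem sortedGE_sortedParts (p : n.Partition) : (sortedParts p).SortedGE :=
  (p.parts.pairwise_sort (· ≤ ·)).sortedLE.reverse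

theorem coe_sortedParts (p : n.Partition) : (sortedParts p : Multiset ℕ) = p.parts := by
  rw [sortedParts, Multiset.coe_reverse, Multiset.sort_eq]

theorem sortedParts_eq {p : n.Partition} (hl : l.SortedGE) (h : p.parts = l) : sortedParts p = l :=
  (Multiset.coe_eq_coe.1 ((coe_sortedParts p).trans h)).eq_of_sortedGE (sortedGE_sortedParts p) hl

/-- Partitions of `n` correspond to Young diagrams with `n` cells, the parts being the row
lengths. -/
def partitionEquivYoungDiagram (n : ℕ) : n.Partition ≃ {μ : YoungDiagram // #μ.cells = n} where
  toFun p := ⟨.ofRowLens (sortedParts p) (sortedGE_sortedParts p), by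
    rw [card_cells_ofRowLens, ← Multiset.sum_coe, coe_sortedParts, p.parts_sum]⟩
  invFun μ :=
    { parts := μ.1.rowLens
      parts_pos := fun hi ↦ μ.1.pos_of_mem_rowLens _ (Multiset.mem_coe.1 hi)
      parts_sum := (card_cells_eq_sum_rowLens μ.1).symm.trans μ.2 }
  left_inv p := by
    have hpos : ∀ i ∈ sortedParts p, 0 < i := fun i hi ↦
      p.parts_pos (by rwa [← coe_sortedParts p])
    ext1
    simp only [YoungDiagram.rowLens_ofRowLens_eq_self hpos, coe_sortedParts]
  right_inv μ := by
    ext1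
    dsimp only
    refine Eq.trans ?_ YoungDiagram.ofRowLens_to_rowLens_eq_self
    congr 1
    exact sortedParts_eq μ.1.rowLens_sorted rfl

theorem sum_fSYT_eq_degree_up_pow_bot (n : ℕ) :
    ∑ p : n.Partition, fSYT (sortedParts p) =
      ((up YoungDiagram ^ n) (Finsupp.single ⊥ 1)).degree := by
  classical
  let e (p : n.Partition) : YoungDiagram := partitionEquivYoungDiagram n p
  have he : Function.Injective e :=
    Subtype.val_injective.comp (partitionEquivYoungDiagram n).injective
  have hsupp : ((up YoungDiagram ^ n) (Finsupp.single ⊥ 1)).support ⊆ univ.image e := by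
    intro μ hμ
    rw [Finsupp.mem_support_iff, up_pow_bot_apply] at hμ
    obtain ⟨p, hp⟩ := (partitionEquivYoungDiagram n).surjective ⟨μ, (ite_ne_right_iff.1 hμ).1⟩
    exact mem_image.2 ⟨p, mem_univ p, congrArg Subtype.val hp⟩
  rw [Finsupp.degree_apply, sum_subset hsupp fun μ _ ↦ Finsupp.notMem_support_iff.1,
    sum_image he.injOn]
  refine sum_congr rfl fun p _ ↦ ?_
  rw [up_pow_bot_apply, if_pos (partitionEquivYoungDiagram n p).2]
  exact fSYT_eq_ncard_standardFillings (sortedGE_sortedParts p)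

end Partitions

section Involutions

open Equiv

/-- The type of involutions of `α`, the identity included. -/
abbrev Involution (α : Type*) : Type _ := {w : Perm α // w⁻¹ = w}

theorem inv_map_eq_map_iff {G H F : Type*} [Group G] [Group H] [FunLike F G H]
    [MonoidHomClass F G H] {f : F} (hf : Function.Injective f) {g : G} :
    (f g)⁻¹ = f g ↔ g⁻¹ = g := by
  rw [← map_inv, hf.eq_iff]

variable {α β : Type*}

theorem card_involution_congr (e : α ≃ β) : Nat.card (Involution α) = Nat.card (Involution β) :=
  Nat.card_congr <| e.permCongrHom.toEquiv.subtypeEquiv fun _ ↦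
    (inv_map_eq_map_iff e.permCongrHom.injective).symm

open Classical in
theorem card_involution_subtype (p : α → Prop) :
    Nat.card (Involution {a // p a}) =
      Nat.card {w : Perm α // (∀ a, ¬p a → w a = a) ∧ w⁻¹ = w} :=
  Nat.card_congr <| ((Perm.subtypeEquivSubtypePerm p).subtypeEquiv fun _ ↦
    (inv_map_eq_map_iff Perm.ofSubtype_injective).symm).trans
      (subtypeSubtypeEquivSubtypeInter (fun w : Perm α ↦ ∀ a, ¬p a → w a = a) (fun w ↦ w⁻¹ = w))

theorem card_involution_of_subsingleton [Subsingleton α] : Nat.card (Involution α) = 1 :=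
  Nat.card_eq_one_iff_unique.2 ⟨inferInstance, ⟨1, inv_one⟩⟩

theorem inv_swap_mul_eq_swap_mul [DecidableEq α] {w : Perm α} {a b : α} (hw : w⁻¹ = w)
    (h : swap (w a) (w b) = swap a b) : (swap a b * w)⁻¹ = swap a b * w := by
  rw [mul_inv_rev, hw, swap_inv, mul_swap_eq_swap_mul, h]

theorem apply_eq_and_inv_eq_self_iff [DecidableEq α] {w : Perm α} {a b : α} :
    w a = b ∧ w⁻¹ = w ↔
      ((swap a b * w) a = a ∧ (swap a b * w) b = b) ∧ (swap a b * w)⁻¹ = swap a b * w := by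
  constructor
  · rintro ⟨rfl, hw⟩
    have hwa : w (w a) = a := (Perm.inv_eq_iff_eq.1 (DFunLike.congr_fun hw a)).symm
    exact ⟨by simp [hwa], inv_swap_mul_eq_swap_mul hw (by rw [hwa, swap_comm])⟩
  · generalize hu : swap a b * w = u
    rintro ⟨⟨ha, hb⟩, hinv⟩
    obtain rfl : w = swap a b * u := by rw [← hu, swap_mul_self_mul]
    exact ⟨by simp [ha], inv_swap_mul_eq_swap_mul hinv (by rw [ha, hb])⟩

/-- Multiplication by `swap a b` turns the involutions exchanging `a` and `b` into those fixing
both. -/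
theorem card_involution_apply_eq (a b : α) :
    Nat.card {w : Perm α // w a = b ∧ w⁻¹ = w} =
      Nat.card (Involution {c // c ≠ a ∧ c ≠ b}) := by
  classical
  rw [card_involution_subtype]
  refine Nat.card_congr <| (Equiv.mulLeft (swap a b)).subtypeEquiv fun w ↦
    apply_eq_and_inv_eq_self_iff.trans (and_congr_left' ?_)
  simp only [coe_mulLeft, ne_eq, not_and_or, not_not, forall_eq_or_imp, forall_eq]

theorem card_involution_eq_sum [Fintype α] (a : α) :
    Nat.card (Involution α) = ∑ b, Nat.card (Involution {c // c ≠ a ∧ c ≠ b}) := by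
  rw [← Nat.card_congr (sigmaFiberEquiv fun w : Involution α ↦ w.1 a), Nat.card_sigma]
  refine sum_congr rfl fun b _ ↦ ?_
  rw [← card_involution_apply_eq]
  exact Nat.card_congr <| (subtypeSubtypeEquivSubtypeInter _ fun w : Perm α ↦ w a = b).trans
    (Equiv.subtypeEquivRight fun _ ↦ and_comm)

theorem card_involution_fin_add_two (n : ℕ) :
    Nat.card (Involution (Fin (n + 2))) =
      Nat.card (Involution (Fin (n + 1))) + (n + 1) * Nat.card (Involution (Fin n)) := by
  have hcard (b : Fin (n + 2)) :
      Nat.card {c : Fin (n + 2) // c ≠ 0 ∧ c ≠ b} = n + 2 - #{0, b} := by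
    trans #({0, b}ᶜ : Finset (Fin (n + 2)))
    · exact Nat.subtype_card _ (by simp)
    · rw [card_compl, Fintype.card_fin]
  have hfix : Nat.card (Involution {c : Fin (n + 2) // c ≠ 0 ∧ c ≠ 0}) =
      Nat.card (Involution (Fin (n + 1))) :=
    card_involution_congr (Finite.equivFinOfCardEq ((hcard 0).trans (by simp)))
  have hswap (i : Fin (n + 1)) : Nat.card (Involution {c : Fin (n + 2) // c ≠ 0 ∧ c ≠ i.succ}) =
      Nat.card (Involution (Fin n)) :=
    card_involution_congr (Finite.equivFinOfCardEq
      ((hcard i.succ).trans (by rw [card_pair i.succ_ne_zero.symm, Nat.add_sub_cancel])))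
  rw [card_involution_eq_sum 0, Fin.sum_univ_succ, hfix, sum_congr rfl fun i _ ↦ hswap i]
  simp

end Involutions

/-- `Σ_{λ ⊢ n} f^λ` equals the number of involutions in `Sₙ`. -/
theorem sum_fSYT_eq_card_involutions (n : ℕ) :
    ∑ p : n.Partition, fSYT ((p.parts.sort (· ≤ ·)).reverse) =
      Nat.card {w : Equiv.Perm (Fin n) // w⁻¹ = w} := by
  refine (sum_fSYT_eq_degree_up_pow_bot n).trans ?_
  induction n using Nat.twoStepInduction with
  | zero =>
    rw [pow_zero, Module.End.one_apply, Finsupp.degree_single]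
    exact card_involution_of_subsingleton.symm
  | one =>
    rw [pow_one, isDifferential_youngDiagram.degree_up_bot]
    exact card_involution_of_subsingleton.symm
  | more n ih ih' =>
    rw [isDifferential_youngDiagram.degree_up_pow_add_two_bot, one_mul, one_mul, ih, ih']
    exact (card_involution_fin_add_two n).symm
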